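/- arXiv:1201.4780 — 2 statements merged into one kernel-verified Lean document; each statement's English description precedes it below -/
import Mathlib

section
/- For the Hadamard walk on the integer line, let m_t = Σ_{k∈ℤ} k·P(k,t) and σ_t = √(Σ_{k∈ℤ} k²·P(k,t) − m_t²) denote the mean and standard deviation of the position distribution after t steps. Then σ_t/t → √((√2 − 1)/2) as t → ∞; in particular the standard deviation of the Hadamard walk grows linearly in t, in contrast with the √t growth of the classical random walk. -/
/-!
In momentum space one step of the walk is multiplication by a unitary `2 × 2` matrix `U = U(z)`,
`|z| = 1`, with `U - U⁻¹` scalar. Put `c = √2 Re z`, `q = 2 + c²`, and let `W = U + U⁻¹`, a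
self-adjoint matrix which commutes with `U` and satisfies `W² = q`. Differentiating the eigenvalues
of `U` shows that the group velocity operator is `V = (c / q) W`, so that `V² = c² / q` is a scalar.

If `X` is the position operator and `σ = diag(-1, 1)`, then `X U = U X + σ U`. The part `σ - V` of
`σ` which is off-diagonal in the eigenbasis of `U` is a coboundary: `(σ - V) U = K U - U K`, where
`q K = σ (U² + 1) - c U` (`intertwine`). Summing over the steps gives
`X Uᵗ δ = t V Uᵗ δ + K Uᵗ δ - Uᵗ K δ` for the initial spinor `δ` (`posPsi_eq`), and the last two
terms are bounded uniformly in `t` and `z` (`posPsi_approx`). Since `V` commutes with `U`, this means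
that at each `z` the squared norm of `X Uᵗ δ` is `t² c² / q + O(t)` and its inner product with
`Uᵗ δ` is `t c² / q + O(1)`, because `⟨δ, W δ⟩ = c`.

By Parseval (`IsTransform.hasSum_norm_sq`, `IsTransform.hasSum_inner`) the second moment and the mean
of the walk are therefore `t² I + O(t)` and `t I + O(1)`, where `I` is the average of `c² / q` over
the circle. A geometric series gives `I = 1 - √2 / 2` (`meanVelSq_eq`), and the variance divided by
`t²` tends to `I - I² = (√2 - 1) / 2`.
-/

open Filter Topology

/-- The Hadamard walk on the integer line: `hadamardWalk t n = (Ψ_L(n,t), Ψ_R(n,t))`. -/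
noncomputable def hadamardWalk : ℕ → ℤ → ℂ × ℂ
  | 0, n => if n = 0 then (0, 1) else (0, 0)
  | t + 1, n =>
      (((hadamardWalk t (n + 1)).2 - (hadamardWalk t (n + 1)).1) / (Real.sqrt 2 : ℂ),
       ((hadamardWalk t (n - 1)).2 + (hadamardWalk t (n - 1)).1) / (Real.sqrt 2 : ℂ))

/-- `P(n,t) = |Ψ_L(n,t)|² + |Ψ_R(n,t)|²`. -/
noncomputable def hadamardProb (n : ℤ) (t : ℕ) : ℝ :=
  ‖(hadamardWalk t n).1‖ ^ 2 + ‖(hadamardWalk t n).2‖ ^ 2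

/-- Mean of the position distribution after `t` steps. -/
noncomputable def hadamardMean (t : ℕ) : ℝ := ∑' k : ℤ, (k : ℝ) * hadamardProb k t

/-- Standard deviation of the position distribution after `t` steps. -/
noncomputable def hadamardStdDev (t : ℕ) : ℝ :=
  Real.sqrt ((∑' k : ℤ, (k : ℝ) ^ 2 * hadamardProb k t) - hadamardMean t ^ 2)

open scoped ComplexConjugate

/-! ### The step matrix at a fixed momentum -/

/-- The amplitudes `(Ψ_L, Ψ_R)` at one momentum, as a vector of `ℂ²` with the Euclidean norm. -/
abbrev Spinor := EuclideanSpace ℂ (Fin 2)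

/-- One step of the walk at momentum `z`, for the transform `∑ n, Ψ(n) zⁿ`. On the unit circle
`conj z` is `z⁻¹`, the factor of a move to the left. -/
noncomputable def stepU (z : ℂ) (x : Spinor) : Spinor :=
  !₂[(x 1 - x 0) / (√2 : ℂ) * conj z, (x 1 + x 0) / (√2 : ℂ) * z]

/-- The direction of motion: `-1` on the left-moving amplitude, `+1` on the right-moving one. -/
def signOp (x : Spinor) : Spinor := !₂[-x 0, x 1]

/-- `c = √2 Re z`; at `z = exp(iθ)` it is the derivative in `θ` of `-i tr U`. -/
noncomputable def cosC (z : ℂ) : ℝ := √2 * z.re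
/-- `q = 2 + c²`, the scalar equal to `(U + U⁻¹)²` when `|z| = 1`. -/
noncomputable def quadQ (z : ℂ) : ℝ := 2 + cosC z ^ 2

/-- `W`, equal to `U + U⁻¹` when `|z| = 1`; the group velocity operator is `(c / q) W`. -/
noncomputable def opW (z : ℂ) (x : Spinor) : Spinor :=
  !₂[-(cosC z : ℂ) * x 0 + (√2 : ℂ) * conj z * x 1, (√2 : ℂ) * z * x 0 + (cosC z : ℂ) * x 1]

/-- `q K = σ (U² + 1) - c U`, where `K` solves `K U - U K = (σ - V) U` for the group velocity
operator `V = (c / q) W`. -/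
noncomputable def opK (z : ℂ) (x : Spinor) : Spinor :=
  signOp (stepU z (stepU z x) + x) - (cosC z : ℂ) • stepU z x

theorem sqrt_two_sq : (√2 : ℂ) * (√2 : ℂ) = 2 := by
  rw [← Complex.ofReal_mul]; norm_num

theorem sqrt_two_ne : (√2 : ℂ) ≠ 0 := by
  rw [Complex.ofReal_ne_zero]; positivity

theorem cosC_eq (z : ℂ) : (cosC z : ℂ) = (z + conj z) / (√2 : ℂ) := by
  rw [eq_div_iff sqrt_two_ne, Complex.add_conj, cosC]
  push_cast
  linear_combination (z.re : ℂ) * sqrt_two_sq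

theorem quadQ_eq {z : ℂ} (hz : z * conj z = 1) :
    (quadQ z : ℂ) = 3 + (z ^ 2 + conj z ^ 2) / 2 := by
  have h := sqrt_two_ne
  rw [quadQ]; push_cast; rw [cosC_eq]
  rw [div_pow, pow_two (√2 : ℂ), sqrt_two_sq]
  linear_combination hz

theorem stepU_add (z : ℂ) (x y : Spinor) : stepU z (x + y) = stepU z x + stepU z y := by
  ext i; fin_cases i <;> simp [stepU] <;> ring

theorem stepU_smul (z a : ℂ) (x : Spinor) : stepU z (a • x) = a • stepU z x := by
  ext i; fin_cases i <;> simp [stepU] <;> ring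

theorem inner_stepU {z : ℂ} (hz : z * conj z = 1) (x y : Spinor) :
    inner ℂ (stepU z x) (stepU z y) = inner ℂ x y := by
  have h := sqrt_two_ne
  have h2 := sqrt_two_sq
  simp [stepU, PiLp.inner_apply, Fin.sum_univ_two]
  field_simp
  simp only [pow_two, h2]
  linear_combination ((y 1 - y 0) * (conj (x 1) - conj (x 0)) +
    (y 1 + y 0) * (conj (x 1) + conj (x 0))) * hz

theorem norm_stepU {z : ℂ} (hz : z * conj z = 1) (x : Spinor) : ‖stepU z x‖ = ‖x‖ := by
  have := inner_stepU hz x x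
  rw [inner_self_eq_norm_sq_to_K, inner_self_eq_norm_sq_to_K] at this
  norm_cast at this
  exact (sq_eq_sq₀ (norm_nonneg _) (norm_nonneg _)).1 this

theorem norm_signOp (x : Spinor) : ‖signOp x‖ = ‖x‖ := by
  simp [signOp, EuclideanSpace.norm_eq, Fin.sum_univ_two]

theorem stepU_opW (z : ℂ) (x : Spinor) :
    stepU z (opW z x) = opW z (stepU z x) := by
  have h := sqrt_two_ne
  have h2 := sqrt_two_sq
  ext i; fin_cases i <;> simp [stepU, opW, cosC_eq] <;> field_simp <;> simp only [pow_two, h2] <;> ring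

/-- The relation `K U - U K = (σ - V) U`, multiplied by `q`. -/
theorem intertwine {z : ℂ} (hz : z * conj z = 1) (x : Spinor) :
    stepU z (opK z x) + (quadQ z : ℂ) • signOp (stepU z x) =
      (cosC z : ℂ) • opW z (stepU z x) + opK z (stepU z x) := by
  have h := sqrt_two_ne
  have h2 := sqrt_two_sq
  ext i; fin_cases i <;> simp [stepU, opW, opK, signOp, cosC_eq, quadQ_eq hz] <;>
   generalize conj z = w at hz ⊢ <;> generalize (√2 : ℂ) = s at h h2 ⊢ <;> field_simp <;> grind

theorem norm_opW {z : ℂ} (hz : z * conj z = 1) (x : Spinor) :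
    ‖opW z x‖ ^ 2 = quadQ z * ‖x‖ ^ 2 := by
  have h := sqrt_two_ne
  have h2 := sqrt_two_sq
  have key : inner ℂ (opW z x) (opW z x) = (quadQ z : ℂ) * inner ℂ x x := by
    have hc := cosC_eq z
    rw [PiLp.inner_apply, PiLp.inner_apply]
    simp [opW, Fin.sum_univ_two, quadQ, -inner_self_eq_norm_sq_to_K]
    linear_combination ( x 0 * conj (x 0) * 2+x 1 * conj (x 1) * 2) * hz +
       z * conj z *  ( x 0 * conj (x 0) +x 1 * conj (x 1)) * h2
  rw [inner_self_eq_norm_sq_to_K, inner_self_eq_norm_sq_to_K] at key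
  simp only [Complex.coe_algebraMap] at key
  exact_mod_cast key

theorem norm_opK_le {z : ℂ} (hz : z * conj z = 1) (x : Spinor) : ‖opK z x‖ ≤ 4 * ‖x‖ := by
  have hn : ‖z‖ = 1 := by
    rw [Complex.mul_conj, Complex.normSq_eq_norm_sq] at hz
    have : ‖z‖ ^ 2 = 1 := by exact_mod_cast hz
    nlinarith [norm_nonneg z]
  have hc : ‖(cosC z : ℂ)‖ ≤ 2 := by
    rw [Complex.norm_real, cosC, norm_mul, Real.norm_of_nonneg (Real.sqrt_nonneg 2)]
    have h1 : √2 ≤ 2 := by rw [Real.sqrt_le_left (by norm_num)]; norm_num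
    have h2 : ‖z.re‖ ≤ 1 := hn ▸ Complex.abs_re_le_norm z
    nlinarith [norm_nonneg z.re]
  calc ‖opK z x‖ ≤ ‖signOp (stepU z (stepU z x) + x)‖ + ‖(cosC z : ℂ) • stepU z x‖ :=
        norm_sub_le _ _
    _ ≤ (‖stepU z (stepU z x)‖ + ‖x‖) + 2 * ‖stepU z x‖ := by
        rw [norm_signOp, norm_smul]
        gcongr
        exact norm_add_le _ _
    _ = 4 * ‖x‖ := by simp only [norm_stepU hz]; ring

/-! ### Pointwise asymptotics of the position operator -/

/-- The transform of the walk at momentum `z` after `t` steps. -/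
noncomputable def psi (z : ℂ) : ℕ → Spinor
  | 0 => !₂[0, 1]
  | t + 1 => stepU z (psi z t)

/-- The transform at momentum `z` of `n ↦ n Ψ(n, t)`: the position operator `X` applied to the walk.
The recurrence is `X U = U X + σ U`, as a step moves by `-1` or `+1`. -/
noncomputable def posPsi (z : ℂ) : ℕ → Spinor
  | 0 => 0
  | t + 1 => stepU z (posPsi z t) + signOp (stepU z (psi z t))

theorem psi_succ (z : ℂ) (t : ℕ) : psi z (t + 1) = stepU z (psi z t) := rfl

theorem norm_psi {z : ℂ} (hz : z * conj z = 1) (t : ℕ) : ‖psi z t‖ = 1 := by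
  induction t with
  | zero => simp [psi, EuclideanSpace.norm_eq, Fin.sum_univ_two]
  | succ t ih => rw [psi, norm_stepU hz, ih]

theorem inner_psi_opW {z : ℂ} (hz : z * conj z = 1) (t : ℕ) :
    inner ℂ (psi z t) (opW z (psi z t)) = (cosC z : ℂ) := by
  induction t with
  | zero => simp [psi, opW, PiLp.inner_apply, Fin.sum_univ_two]
  | succ t ih => rw [psi, ← stepU_opW, inner_stepU hz, ih]

theorem two_le_quadQ (z : ℂ) : 2 ≤ quadQ z := by
  unfold quadQ; nlinarith [sq_nonneg (cosC z)]

/-- The identity `X Uᵗ δ = t V Uᵗ δ + K Uᵗ δ - Uᵗ K δ`, multiplied by `q`. -/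
theorem posPsi_eq {z : ℂ} (hz : z * conj z = 1) (t : ℕ) :
    (quadQ z : ℂ) • posPsi z t = (t * cosC z : ℂ) • opW z (psi z t) +
      (opK z (psi z t) - (stepU z)^[t] (opK z (psi z 0))) := by
  induction t with
  | zero => simp [posPsi]
  | succ t ih =>
    have sub (x y : Spinor) : stepU z (x - y) = stepU z x - stepU z y := by
      have := stepU_add z (x - y) y
      rw [sub_add_cancel] at this
      rw [this, add_sub_cancel_right]
    rw [posPsi, smul_add, ← stepU_smul, ih, stepU_add, stepU_smul, sub, stepU_opW,
      Function.iterate_succ_apply', psi_succ]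
    have := intertwine hz (psi z t)
    rw [← eq_sub_iff_add_eq'] at this
    rw [this]
    push_cast
    module

theorem norm_iterate_stepU {z : ℂ} (hz : z * conj z = 1) (x : Spinor) (t : ℕ) :
    ‖(stepU z)^[t] x‖ = ‖x‖ := by
  induction t with
  | zero => rfl
  | succ t ih => rw [Function.iterate_succ_apply', norm_stepU hz, ih]

/-- The squared group velocity `c² / q`. -/
noncomputable def velSq (z : ℂ) : ℝ := cosC z ^ 2 / quadQ z

theorem posPsi_approx {z : ℂ} (hz : z * conj z = 1) (t : ℕ) :
    ‖posPsi z t - ((t * cosC z / quadQ z : ℝ) : ℂ) • opW z (psi z t)‖ ≤ 4 := by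
  have hq := two_le_quadQ z
  have hq0 : (quadQ z : ℂ) ≠ 0 := by rw [Complex.ofReal_ne_zero]; linarith
  have h1 : (quadQ z : ℂ) • (posPsi z t - ((t * cosC z / quadQ z : ℝ) : ℂ) • opW z (psi z t)) =
      opK z (psi z t) - (stepU z)^[t] (opK z (psi z 0)) := by
    rw [smul_sub, posPsi_eq hz, smul_smul]
    push_cast
    rw [mul_div_cancel₀ _ hq0, add_sub_cancel_left]
  have h2 : quadQ z * ‖posPsi z t - ((t * cosC z / quadQ z : ℝ) : ℂ) • opW z (psi z t)‖ ≤ 8 := by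
    have h3 := congrArg norm h1
    rw [norm_smul, Complex.norm_real, Real.norm_of_nonneg (by linarith)] at h3
    rw [h3]
    refine (norm_sub_le _ _).trans ?_
    rw [norm_iterate_stepU hz]
    have h4 := norm_opK_le hz (psi z t)
    have h5 := norm_opK_le hz (psi z 0)
    rw [norm_psi hz] at h4 h5
    linarith
  nlinarith [norm_nonneg (posPsi z t - ((t * cosC z / quadQ z : ℝ) : ℂ) • opW z (psi z t))]

theorem inner_approx {z : ℂ} (hz : z * conj z = 1) (t : ℕ) :
    |(inner ℂ (psi z t) (posPsi z t)).re - t * velSq z| ≤ 4 := by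
  have h := norm_inner_le_norm (𝕜 := ℂ) (psi z t)
    (posPsi z t - ((t * cosC z / quadQ z : ℝ) : ℂ) • opW z (psi z t))
  rw [norm_psi hz, one_mul, inner_sub_right, inner_smul_right, inner_psi_opW hz] at h
  refine le_trans ?_ (h.trans (posPsi_approx hz t))
  refine le_trans (le_of_eq ?_) (Complex.abs_re_le_norm _)
  rw [Complex.sub_re, ← Complex.ofReal_mul, Complex.ofReal_re, velSq]
  congr 2
  ring

theorem norm_sq_approx {z : ℂ} (hz : z * conj z = 1) (t : ℕ) :
    |‖posPsi z t‖ ^ 2 - t ^ 2 * velSq z| ≤ 8 * t + 16 := by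
  have hq := two_le_quadQ z
  set b := ‖((t * cosC z / quadQ z : ℝ) : ℂ) • opW z (psi z t)‖ with hb
  have hb2 : b ^ 2 = t ^ 2 * velSq z := by
    rw [hb, norm_smul, mul_pow, norm_opW hz, norm_psi hz, Complex.norm_real, Real.norm_eq_abs,
      sq_abs, velSq]
    field_simp
  have hv : velSq z ≤ 1 := by
    rw [velSq, div_le_one (by linarith), quadQ]; linarith
  have hb0 : 0 ≤ b := norm_nonneg _
  have hbt : b ≤ t := by
    refine (sq_le_sq₀ hb0 t.cast_nonneg).1 ?_
    rw [hb2]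
    exact mul_le_of_le_one_right (by positivity) hv
  have hd : |‖posPsi z t‖ - b| ≤ 4 := (abs_norm_sub_norm_le _ _).trans (posPsi_approx hz t)
  rw [← hb2, sq_sub_sq, abs_mul, abs_of_nonneg (add_nonneg (norm_nonneg _) hb0)]
  have := (abs_le.1 hd).2
  nlinarith [abs_nonneg (‖posPsi z t‖ - b), norm_nonneg (posPsi z t)]

/-! ### Passage between position space and momentum space -/

open MeasureTheory AddCircle

/-- `f` is a continuous function on the circle whose sequence of Fourier coefficients is `u`. -/
structure IsTransform (u : ℤ → ℂ) (f : UnitAddCircle → ℂ) : Prop where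
  continuous : Continuous f
  coeff : ∀ n, fourierCoeff f n = u n

/-- The momentum variable `z = exp(2πiθ)`. -/
noncomputable def phase (θ : UnitAddCircle) : ℂ := fourier 1 θ

@[fun_prop]
theorem continuous_phase : Continuous phase := (fourier 1).continuous

theorem norm_phase (θ : UnitAddCircle) : ‖phase θ‖ = 1 := by
  rw [phase, fourier_one, Circle.norm_coe]

theorem phase_mul_conj (θ : UnitAddCircle) : phase θ * conj (phase θ) = 1 := by
  rw [phase, ← fourier_neg, ← fourier_add, add_neg_cancel, fourier_zero]

theorem Continuous.integrable_circle {E : Type*} [NormedAddCommGroup E]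
    {f : UnitAddCircle → E} (hf : Continuous f) :
    Integrable f haarAddCircle :=
  hf.integrable_of_hasCompactSupport (HasCompactSupport.of_compactSpace f)

namespace IsTransform

variable {u v : ℤ → ℂ} {f g : UnitAddCircle → ℂ}

theorem add (hf : IsTransform u f) (hg : IsTransform v g) :
    IsTransform (fun n => u n + v n) (fun θ => f θ + g θ) where
  continuous := hf.continuous.add hg.continuous
  coeff n := by
    have := congrFun (fourierCoeff.add hf.continuous.integrable_circle
      hg.continuous.integrable_circle) n
    rw [Pi.add_apply, hf.coeff, hg.coeff] at this
    exact this

theorem const_mul (c : ℂ) (hf : IsTransform u f) :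
    IsTransform (fun n => c * u n) (fun θ => c * f θ) where
  continuous := continuous_const.mul hf.continuous
  coeff n := by rw [fourierCoeff.const_mul, hf.coeff]

theorem sub (hf : IsTransform u f) (hg : IsTransform v g) :
    IsTransform (fun n => u n - v n) (fun θ => f θ - g θ) := by
  simpa [sub_eq_add_neg] using hf.add (hg.const_mul (-1))

theorem div_const (hf : IsTransform u f) (c : ℂ) :
    IsTransform (fun n => u n / c) (fun θ => f θ / c) := by
  simpa only [div_eq_inv_mul] using hf.const_mul c⁻¹

theorem mul_phase (hf : IsTransform u f) :
    IsTransform (fun n => u (n - 1)) (fun θ => f θ * phase θ) where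
  continuous := hf.continuous.mul continuous_phase
  coeff n := by
    rw [← hf.coeff, fourierCoeff, fourierCoeff]
    congr 1 with θ
    rw [neg_sub, sub_eq_neg_add, fourier_add, phase]
    simp only [smul_eq_mul]
    ring

theorem mul_conj_phase (hf : IsTransform u f) :
    IsTransform (fun n => u (n + 1)) (fun θ => f θ * conj (phase θ)) where
  continuous := hf.continuous.mul (Complex.continuous_conj.comp continuous_phase)
  coeff n := by
    rw [← hf.coeff, fourierCoeff, fourierCoeff]
    congr 1 with θ
    rw [neg_add, fourier_add, phase, ← fourier_neg]
    simp only [smul_eq_mul]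
    ring

theorem zero : IsTransform (fun _ => 0) (fun _ => 0) :=
  ⟨continuous_const, fun n => by simp [fourierCoeff]⟩

theorem one : IsTransform (fun n => if n = 0 then 1 else 0) (fun _ => 1) where
  continuous := continuous_const
  coeff n := by
    have := congrFun (fourierCoeff_fourier (T := 1) 0) n
    rw [Pi.single_apply] at this
    rw [← this]
    congr 1 with θ
    rw [fourier_zero]

/-- Parseval's identity. -/
theorem hasSum_norm_sq (hf : IsTransform u f) :
    HasSum (fun n => ‖u n‖ ^ 2) (∫ θ, ‖f θ‖ ^ 2 ∂haarAddCircle) := by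
  let F : C(UnitAddCircle, ℂ) := ⟨f, hf.continuous⟩
  have h := hasSum_sq_fourierCoeff (ContinuousMap.toLp (E := ℂ) 2 haarAddCircle ℂ F)
  simp_rw [fourierCoeff_toLp] at h
  have h2 : ∀ n, fourierCoeff F n = u n := hf.coeff
  simp_rw [h2] at h
  convert h using 1
  refine integral_congr_ae ?_
  filter_upwards [ContinuousMap.coeFn_toLp (p := 2) (𝕜 := ℂ) haarAddCircle F] with θ hθ
  rw [hθ]
  rfl

theorem integrable_norm_sq (hf : IsTransform u f) :
    Integrable (fun θ => ‖f θ‖ ^ 2) haarAddCircle :=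
  (hf.continuous.norm.pow 2).integrable_circle

theorem integrable_re_inner (hf : IsTransform u f) (hg : IsTransform v g) :
    Integrable (fun θ => (inner ℂ (f θ) (g θ)).re) haarAddCircle :=
  (Complex.continuous_re.comp (hf.continuous.inner (𝕜 := ℂ) hg.continuous)).integrable_circle

/-- The real part of Parseval's identity for two functions, obtained by polarization. -/
theorem hasSum_inner (hf : IsTransform u f) (hg : IsTransform v g) :
    HasSum (fun n => (inner ℂ (u n) (v n)).re)
      (∫ θ, (inner ℂ (f θ) (g θ)).re ∂haarAddCircle) := by
  have pol (a b : ℂ) : (inner ℂ a b).re = (‖a + b‖ ^ 2 - ‖a‖ ^ 2 - ‖b‖ ^ 2) / 2 := by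
    have := norm_add_sq (𝕜 := ℂ) a b
    simp only [RCLike.re_eq_complex_re] at this
    rw [this]; ring
  simp_rw [pol]
  have h1 := (hf.add hg).integrable_norm_sq
  have h2 := hf.integrable_norm_sq
  have h12 : Integrable (fun θ => ‖f θ + g θ‖ ^ 2 - ‖f θ‖ ^ 2) haarAddCircle := h1.sub h2
  rw [integral_div, integral_sub h12 hg.integrable_norm_sq, integral_sub h1 h2]
  exact (((hf.add hg).hasSum_norm_sq.sub hf.hasSum_norm_sq).sub hg.hasSum_norm_sq).div_const 2

end IsTransform

theorem isTransform_psi (t : ℕ) :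
    IsTransform (fun n => (hadamardWalk t n).1) (fun θ => psi (phase θ) t 0) ∧
      IsTransform (fun n => (hadamardWalk t n).2) (fun θ => psi (phase θ) t 1) := by
  induction t with
  | zero =>
    constructor
    · simpa [hadamardWalk, psi, apply_ite Prod.fst] using IsTransform.zero
    · simpa [hadamardWalk, psi, apply_ite Prod.snd] using IsTransform.one
  | succ t ih =>
    exact ⟨((ih.2.sub ih.1).div_const _).mul_conj_phase, ((ih.2.add ih.1).div_const _).mul_phase⟩

theorem isTransform_posPsi (t : ℕ) :
    IsTransform (fun n => (n : ℂ) * (hadamardWalk t n).1) (fun θ => posPsi (phase θ) t 0) ∧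
      IsTransform (fun n => (n : ℂ) * (hadamardWalk t n).2) (fun θ => posPsi (phase θ) t 1) := by
  induction t with
  | zero =>
    have h0 (n : ℤ) : (n : ℂ) * (hadamardWalk 0 n).1 = 0 ∧ (n : ℂ) * (hadamardWalk 0 n).2 = 0 := by
      by_cases hn : n = 0 <;> simp [hadamardWalk, hn]
    simp only [h0, posPsi]
    exact ⟨IsTransform.zero, IsTransform.zero⟩
  | succ t ih =>
    obtain ⟨h1, h2⟩ := isTransform_psi t
    constructor
    · convert (((ih.2.sub ih.1).div_const (√2 : ℂ)).mul_conj_phase).sub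
        ((h2.sub h1).div_const (√2 : ℂ)).mul_conj_phase using 2 with n θ
      · simp only [hadamardWalk]; push_cast; ring
      · simp [posPsi, stepU, signOp]; ring
    · convert (((ih.2.add ih.1).div_const (√2 : ℂ)).mul_phase).add
        ((h2.add h1).div_const (√2 : ℂ)).mul_phase using 2 with n θ
      · simp only [hadamardWalk]; push_cast; ring
      · simp [posPsi, stepU, signOp]

theorem continuous_psi (t : ℕ) : Continuous (fun θ => psi (phase θ) t) := by
  obtain ⟨h1, h2⟩ := isTransform_psi t
  refine (PiLp.continuous_toLp 2 _).comp (continuous_pi (f := fun θ => (psi (phase θ) t).ofLp) ?_)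
  intro i; fin_cases i
  exacts [h1.continuous, h2.continuous]

theorem continuous_posPsi (t : ℕ) : Continuous (fun θ => posPsi (phase θ) t) := by
  obtain ⟨h1, h2⟩ := isTransform_posPsi t
  refine (PiLp.continuous_toLp 2 _).comp
    (continuous_pi (f := fun θ => (posPsi (phase θ) t).ofLp) ?_)
  intro i; fin_cases i
  exacts [h1.continuous, h2.continuous]

/-! ### The moments of the walk -/

theorem tsum_second_moment (t : ℕ) :
    ∑' k : ℤ, (k : ℝ) ^ 2 * hadamardProb k t = ∫ θ, ‖posPsi (phase θ) t‖ ^ 2 ∂haarAddCircle := by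
  obtain ⟨h1, h2⟩ := isTransform_posPsi t
  have h := h1.hasSum_norm_sq.add h2.hasSum_norm_sq
  rw [← integral_add h1.integrable_norm_sq h2.integrable_norm_sq] at h
  simp_rw [EuclideanSpace.norm_sq_eq, Fin.sum_univ_two]
  rw [← h.tsum_eq]
  congr 1 with n
  simp only [norm_mul, Complex.norm_intCast, mul_pow, sq_abs, hadamardProb]
  ring

theorem hadamardMean_eq (t : ℕ) :
    hadamardMean t =
      ∫ θ, (inner ℂ (psi (phase θ) t) (posPsi (phase θ) t)).re ∂haarAddCircle := by
  obtain ⟨h1, h2⟩ := isTransform_posPsi t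
  obtain ⟨g1, g2⟩ := isTransform_psi t
  have h := (g1.hasSum_inner h1).add (g2.hasSum_inner h2)
  rw [← integral_add (g1.integrable_re_inner h1) (g2.integrable_re_inner h2)] at h
  simp_rw [PiLp.inner_apply, Fin.sum_univ_two, Complex.add_re]
  rw [← h.tsum_eq, hadamardMean]
  congr 1 with n
  have key (a : ℂ) : (inner ℂ a ((n : ℂ) * a)).re = n * ‖a‖ ^ 2 := by
    rw [← smul_eq_mul, inner_smul_right, inner_self_eq_norm_sq_to_K]
    simp only [Complex.coe_algebraMap]
    norm_cast
  rw [key, key, hadamardProb]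
  ring

@[fun_prop]
theorem continuous_cosC : Continuous cosC := by unfold cosC; fun_prop

theorem continuous_velSq : Continuous velSq := by
  unfold velSq quadQ
  refine Continuous.div (by fun_prop) (by fun_prop) fun z => ?_
  have := two_le_quadQ z
  rw [quadQ] at this
  linarith

theorem abs_integral_sub_le {f g : UnitAddCircle → ℝ} (hf : Continuous f) (hg : Continuous g)
    {C : ℝ} (h : ∀ θ, |f θ - g θ| ≤ C) :
    |∫ θ, f θ ∂haarAddCircle - ∫ θ, g θ ∂haarAddCircle| ≤ C := by
  rw [← integral_sub hf.integrable_circle hg.integrable_circle]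
  have h' : ∀ θ, ‖f θ - g θ‖ ≤ C := h
  simpa using norm_integral_le_of_norm_le_const (μ := haarAddCircle) (.of_forall h')

/-- The average over the circle of the squared group velocity. -/
noncomputable def meanVelSq : ℝ := ∫ θ, velSq (phase θ) ∂haarAddCircle

theorem second_moment_approx (t : ℕ) :
    |∑' k : ℤ, (k : ℝ) ^ 2 * hadamardProb k t - t ^ 2 * meanVelSq| ≤ 8 * t + 16 := by
  rw [tsum_second_moment, meanVelSq, ← integral_const_mul]
  exact abs_integral_sub_le ((continuous_posPsi t).norm.pow 2)
    (continuous_const.mul (continuous_velSq.comp continuous_phase))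
    fun θ => norm_sq_approx (phase_mul_conj θ) t

theorem mean_approx (t : ℕ) : |hadamardMean t - t * meanVelSq| ≤ 4 := by
  rw [hadamardMean_eq, meanVelSq, ← integral_const_mul]
  exact abs_integral_sub_le
    (Complex.continuous_re.comp ((continuous_psi t).inner (𝕜 := ℂ) (continuous_posPsi t)))
    (continuous_const.mul (continuous_velSq.comp continuous_phase))
    fun θ => inner_approx (phase_mul_conj θ) t

/-! ### The mean squared velocity -/

/-- The constant Fourier coefficient of `h = (1 - r z²)⁻¹`. The equation `h = 1 + r z² h` gives
`h_n = r h_{n-2}` for `n < 0`, so by boundedness these coefficients vanish and `h_0 = 1`. -/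
theorem integral_geometric {r : ℝ} (hr : |r| < 1) :
    ∫ θ, (1 - r * phase θ ^ 2)⁻¹ ∂haarAddCircle = (1 : ℂ) := by
  have hlow (θ : UnitAddCircle) : 1 - |r| ≤ ‖1 - r * phase θ ^ 2‖ := by
    have := norm_sub_norm_le (1 : ℂ) (r * phase θ ^ 2)
    simpa [norm_phase] using this
  have hne (θ : UnitAddCircle) : 1 - r * phase θ ^ 2 ≠ 0 := by
    rw [← norm_pos_iff]; linarith [hlow θ]
  set h : UnitAddCircle → ℂ := fun θ => (1 - r * phase θ ^ 2)⁻¹ with hh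
  have hcont : Continuous h := Continuous.inv₀ (by fun_prop) hne
  have htr : IsTransform (fourierCoeff h) h := ⟨hcont, fun _ => rfl⟩
  have hrec (n : ℤ) : fourierCoeff h n =
      (if n = 0 then 1 else 0) + r * fourierCoeff h (n - 1 - 1) := by
    rw [← (IsTransform.one.add (htr.mul_phase.mul_phase.const_mul r)).coeff n]
    congr 1 with θ
    simp only [hh]
    field_simp [hne θ]
    ring
  have hbd (n : ℤ) : ‖fourierCoeff h n‖ ≤ (1 - |r|)⁻¹ := by
    have : ∀ θ, ‖fourier (-n) θ • h θ‖ ≤ (1 - |r|)⁻¹ := fun θ => by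
      rw [norm_smul, fourier_apply, Circle.norm_coe, one_mul, hh, norm_inv]
      exact inv_anti₀ (by linarith) (hlow θ)
    simpa [fourierCoeff] using
      norm_integral_le_of_norm_le_const (μ := haarAddCircle) (.of_forall this)
  have hiter (m : ℕ) : ∀ n : ℤ, n < 0 → ‖fourierCoeff h n‖ ≤ |r| ^ m * (1 - |r|)⁻¹ := by
    induction m with
    | zero => intro n _; simpa using hbd n
    | succ m ih =>
      intro n hn
      rw [hrec, if_neg hn.ne, zero_add, norm_mul, Complex.norm_real, Real.norm_eq_abs, pow_succ',
        mul_assoc]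
      exact mul_le_mul_of_nonneg_left (ih _ (by omega)) (abs_nonneg r)
  have hlim : Tendsto (fun m : ℕ => |r| ^ m * (1 - |r|)⁻¹) atTop (𝓝 0) := by
    simpa using (tendsto_pow_atTop_nhds_zero_of_lt_one (abs_nonneg r) hr).mul_const (1 - |r|)⁻¹
  have hneg : fourierCoeff h (0 - 1 - 1) = 0 :=
    norm_le_zero_iff.1 (ge_of_tendsto' hlim fun m => hiter m _ (by norm_num))
  have h0 := hrec 0
  rw [hneg] at h0
  simpa [fourierCoeff] using h0

/-- For `r = 2√2 - 3`, a root of `r² + 6r + 1`, one has `-2 r q = (1 - r z²)(1 - r z⁻²)` on the unit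
circle, which makes `c² / q` a combination of a constant and the real part of `(1 - r z²)⁻¹`. -/
theorem meanVelSq_eq : meanVelSq = 1 - √2 / 2 := by
  have hs : √2 * √2 = 2 := Real.mul_self_sqrt (by norm_num)
  have hs1 : 1.4 < √2 := by rw [Real.lt_sqrt] <;> norm_num
  have hs2 : √2 < 1.5 := by rw [Real.sqrt_lt'] <;> norm_num
  obtain ⟨r, hr⟩ : ∃ r : ℝ, r = 2 * √2 - 3 := ⟨_, rfl⟩
  have hr1 : |r| < 1 := by rw [abs_lt]; constructor <;> linarith
  have hgeo := integral_geometric hr1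
  have hne (θ : UnitAddCircle) : 1 - r * phase θ ^ 2 ≠ 0 := by
    intro h0
    have h1 : (1 : ℂ) = r * phase θ ^ 2 := sub_eq_zero.1 h0
    have := congrArg norm h1
    simp [norm_phase] at this
    linarith
  have hpt (θ : UnitAddCircle) :
      velSq (phase θ) = 1 + √2 / 2 - √2 * ((1 - r * phase θ ^ 2)⁻¹ : ℂ).re := by
    have hz := phase_mul_conj θ
    have hne := hne θ
    have hne' : 1 - r * conj (phase θ) ^ 2 ≠ 0 := by
      have := (map_ne_zero (starRingEnd ℂ)).2 hne
      simpa using this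
    have hq0 : (quadQ (phase θ) : ℂ) ≠ 0 := by
      rw [Complex.ofReal_ne_zero]; linarith [two_le_quadQ (phase θ)]
    have hv : velSq (phase θ) = 1 - 2 / quadQ (phase θ) := by
      have := two_le_quadQ (phase θ)
      rw [velSq]; field_simp; rw [quadQ]; ring
    rw [hv, ← Complex.ofReal_inj]
    push_cast
    rw [Complex.re_eq_add_conj]
    simp only [map_inv₀, map_sub, map_mul, map_pow, map_one, Complex.conj_ofReal]
    rw [quadQ_eq hz] at hq0 ⊢
    have hrc : (r : ℂ) = 2 * √2 - 3 := by rw [hr]; push_cast; ring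
    have h2 := sqrt_two_sq
    -- The numerator identity reduces to `(1 + 3 r) / r = -2 √2`.
    have hsum : (1 - r * phase θ ^ 2)⁻¹ + (1 - r * conj (phase θ) ^ 2)⁻¹ =
        1 + 2 * √2 / (3 + (phase θ ^ 2 + conj (phase θ) ^ 2) / 2) := by
      generalize conj (phase θ) = w at hne hne' hz hq0 ⊢
      generalize phase θ = z at hne hne' hz hq0 ⊢
      clear hgeo
      generalize (√2 : ℂ) = s at hrc h2 ⊢
      rw [inv_add_inv hne hne', eq_comm, ← sub_eq_zero, one_add_div hq0,
        div_sub_div _ _ hq0 (mul_ne_zero hne hne'), div_eq_zero_iff]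
      left
      grind
    rw [hsum]
    linear_combination (1 / (3 + (phase θ ^ 2 + conj (phase θ) ^ 2) / 2)) * h2
  have hcont : Continuous fun θ => (1 - r * phase θ ^ 2)⁻¹ :=
    Continuous.inv₀ (by fun_prop) hne
  simp_rw [meanVelSq, hpt]
  rw [integral_sub (by fun_prop) , integral_const_mul]
  · have : ∫ θ, ((1 - r * phase θ ^ 2)⁻¹ : ℂ).re ∂haarAddCircle = 1 := by
      have := integral_re (𝕜 := ℂ) hcont.integrable_circle
      simp only [RCLike.re_eq_complex_re] at this
      rw [this, hgeo]; rfl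
    rw [this]
    simp
    ring
  · exact (continuous_const.mul (Complex.continuous_re.comp hcont)).integrable_circle

/-! ### The standard deviation -/

theorem hadamardWalk_stddev_linear :
    Tendsto (fun t : ℕ => hadamardStdDev t / (t : ℝ)) atTop
      (𝓝 (Real.sqrt ((Real.sqrt 2 - 1) / 2))) := by
  have hinv : Tendsto (fun t : ℕ => ((t : ℝ))⁻¹) atTop (𝓝 0) := tendsto_inv_atTop_nhds_zero_nat
  have h1 : Tendsto (fun t : ℕ => hadamardMean t / t) atTop (𝓝 meanVelSq) := by
    rw [tendsto_iff_dist_tendsto_zero]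
    refine squeeze_zero' (g := fun t : ℕ => 4 * (t : ℝ)⁻¹) (.of_forall fun _ => dist_nonneg) ?_
      (by simpa using hinv.const_mul 4)
    filter_upwards [eventually_gt_atTop 0] with t ht
    have ht' : (0 : ℝ) < t := by exact_mod_cast ht
    have : hadamardMean t / t - meanVelSq = (hadamardMean t - t * meanVelSq) * (t : ℝ)⁻¹ := by
      field_simp
    rw [Real.dist_eq, this, abs_mul, abs_of_pos (inv_pos.2 ht')]
    exact mul_le_mul_of_nonneg_right (mean_approx t) (inv_nonneg.2 ht'.le)
  have h2 : Tendsto (fun t : ℕ => (∑' k : ℤ, (k : ℝ) ^ 2 * hadamardProb k t) / t ^ 2) atTop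
      (𝓝 meanVelSq) := by
    rw [tendsto_iff_dist_tendsto_zero]
    refine squeeze_zero' (g := fun t : ℕ => 8 * (t : ℝ)⁻¹ + 16 * (t : ℝ)⁻¹ ^ 2)
      (.of_forall fun _ => dist_nonneg) ?_
      (by simpa using (hinv.const_mul 8).add ((hinv.pow 2).const_mul 16))
    filter_upwards [eventually_gt_atTop 0] with t ht
    have ht' : (0 : ℝ) < t := by exact_mod_cast ht
    have : (∑' k : ℤ, (k : ℝ) ^ 2 * hadamardProb k t) / t ^ 2 - meanVelSq =
        (∑' k : ℤ, (k : ℝ) ^ 2 * hadamardProb k t - t ^ 2 * meanVelSq) * (t : ℝ)⁻¹ ^ 2 := by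
      field_simp
    rw [Real.dist_eq, this, abs_mul, abs_of_pos (a := (t : ℝ)⁻¹ ^ 2) (by positivity)]
    refine (mul_le_mul_of_nonneg_right (second_moment_approx t) (by positivity)).trans_eq ?_
    field_simp
  have h3 := (h2.sub (h1.pow 2)).sqrt
  have hI : meanVelSq - meanVelSq ^ 2 = (√2 - 1) / 2 := by
    have hs : √2 ^ 2 = 2 := Real.sq_sqrt (by norm_num)
    rw [meanVelSq_eq]
    linear_combination (-1 / 4 : ℝ) * hs
  rw [hI] at h3
  refine h3.congr fun t => ?_
  rw [hadamardStdDev, div_pow, ← sub_div, Real.sqrt_div' _ (by positivity),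
    Real.sqrt_sq t.cast_nonneg]
end

section
/- There exists a constant c > 0 such that for every odd integer n ≥ 3, every ε with 0 < ε < 1, every initial state ψ₀ that is a standard basis state (concentrated at a single node with a single coin basis value), and every integer T ≥ c·n·(log n)/ε³, the time-averaged node distribution of the Hadamard walk on the n-cycle is ε-close in total variation to uniform: (1/2)·Σ_{v ∈ ℤ/nℤ} | (1/T)·Σ_{t=0}^{T−1} P_t(v | ψ₀) − 1/n | ≤ ε. In other words, the mixing time of the Hadamard walk on the odd n-cycle is at most O(n·log n / ε³). -/
/-!
The proof works in Fourier space and needs no diagonalisation. Write `e` for the standard additive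
character of `ZMod n`.

On each Fourier mode `k` a step acts as a unitary `2 × 2` matrix of determinant `-1` and purely
imaginary trace `τ k = (e (-k) - e k) / √2`. By Cayley–Hamilton, each Fourier amplitude satisfies
`a (t + 2) = a t + τ k * a (t + 1)` (`ampL_rec`, `ampR_rec`). For two sequences `a`, `b` of this
kind with parameters `α`, `β`, `β` imaginary, the quantity
`a t * conj (b (t + 1)) + a (t + 1) * conj (b t)` increases from `t` to `t + 1` by
`(α - β) * a (t + 1) * conj (b (t + 1))`. The correlations of the modes `k + m` and `k` therefore
telescope in time (`step_tel`), and since the amplitudes on each mode form a unit vector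
(`amp_norm`), their sum over time is `O(1 / |τ (k + m) - τ k|)`, uniformly in `T`.

The gap factors: `|τ (k + m) - τ k| = |e m - 1| * |e (2 k + m) + 1| / √2` (`trc_gap`). For odd `n`
the map `k ↦ 2 k + m` permutes `ZMod n` and `-1` is not an `n`-th root of unity, so summing over `k`
bounds the `m`-th Fourier coefficient of the averaged distribution by `O(log n / (T * |e m - 1|))`
for `m ≠ 0` (`hat_avg_le`, using `∑ 1 / |e l + 1| = O(n log n)`). At `m = 0` subtracting the uniform
distribution leaves `0`. Parseval, `∑ 1 / |e m - 1| ^ 2 ≤ n ^ 2` and Cauchy–Schwarz bound the total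
variation distance by `O(n log n / T)` (`tv_bound`), which is stronger than required.
-/

open Filter Topology

/-- One step of the Hadamard walk on the n-cycle. -/
noncomputable def cycleHadamardStep (n : ℕ) (ψ : ZMod n → ℂ × ℂ) : ZMod n → ℂ × ℂ :=
  fun v =>
    (((ψ (v + 1)).2 - (ψ (v + 1)).1) / (Real.sqrt 2 : ℂ),
     ((ψ (v - 1)).2 + (ψ (v - 1)).1) / (Real.sqrt 2 : ℂ))

/-! ### Telescoping correlations of two recurrent sequences -/

/-- Discrete Lagrange identity: the correlation sum of two solutions of
`x (t + 2) = x t + γ * x (t + 1)` with parameters `γ = α` and `γ = β`, multiplied by `α - β`, is a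
boundary term. -/
lemma step_tel (a b : ℕ → ℂ) (α β : ℂ) (ha : ∀ t, a (t+2) = a t + α * a (t+1))
    (hb : ∀ t, b (t+2) = b t + β * b (t+1)) (hβ : star β = -β) (T : ℕ) :
    (α - β) * ∑ t ∈ Finset.range T, a t * star (b t) =
      (a T * star (b (T+1)) + a (T+1) * star (b T)) - (a 0 * star (b 1) + a 1 * star (b 0))
        + (α - β) * (a 0 * star (b 0) - a T * star (b T)) := by
  induction T with
  | zero => simp
  | succ T ih =>
    rw [Finset.sum_range_succ, mul_add, ih, ha, hb, star_add, star_mul, hβ]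
    ring

/-! ### Sums over the nontrivial `n`-th roots of unity -/

lemma sum_val (n : ℕ) [NeZero n] (F : ℕ → ℝ) : ∑ l : ZMod n, F l.val = ∑ i ∈ Finset.range n, F i := by
  obtain ⟨k, rfl⟩ : ∃ k, n = k + 1 := ⟨n - 1, by have := NeZero.pos n; omega⟩
  exact Fin.sum_univ_eq_sum_range F (k+1)

/-- Jordan's inequality `sin x ≥ 2 x / π`, for the chord from `1` to a root of unity in the closed
upper half plane. -/
lemma chr_lower (n : ℕ) [NeZero n] (l : ZMod n) (hl : 2 * l.val ≤ n) :
    4 * (l.val : ℝ) / n ≤ ‖ZMod.stdAddChar l - 1‖ := by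
  have hn : (0:ℝ) < n := by exact_mod_cast NeZero.pos n
  have h : (ZMod.stdAddChar l : ℂ) = Complex.exp (Complex.I * ((2 * Real.pi * l.val / n : ℝ))) := by
    rw [ZMod.stdAddChar_apply, ZMod.toCircle_apply]
    congr 1; push_cast; ring
  rw [h, Complex.norm_exp_I_mul_ofReal_sub_one]
  have hl' : (2 * l.val : ℝ) ≤ n := by exact_mod_cast hl
  have := Real.mul_le_sin (x := Real.pi * l.val / n) (by positivity) (by
    rw [div_le_div_iff₀ hn (by norm_num)]; nlinarith [Real.pi_pos])
  have e : 2 * Real.pi * l.val / n / 2 = Real.pi * l.val / n := by ring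
  rw [e, Real.norm_eq_abs]
  refine le_trans ?_ (le_abs_self _)
  have e2 : 2 / Real.pi * (Real.pi * l.val / n) = 2 * l.val / n := by
    field_simp
  rw [e2] at this
  calc _ = 2 * (2 * (l.val:ℝ) / n) := by ring
    _ ≤ _ := by linarith

lemma chr_neg (n : ℕ) [NeZero n] (l : ZMod n) :
    ‖ZMod.stdAddChar (-l) - 1‖ = ‖ZMod.stdAddChar l - 1‖ := by
  rw [AddChar.map_neg_eq_conj, ← Complex.norm_conj, map_sub, map_one, Complex.conj_conj]

/-- Since `(-l).val = n - l.val` for `l ≠ 0`, the two terms cover the upper and the lower half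
circle. At `l = 0` both sides are `0`, as `0⁻¹ = 0`, so that sums may run over all of `ZMod n`. -/
lemma chr_inv (n : ℕ) [NeZero n] (l : ZMod n) :
    ‖ZMod.stdAddChar l - 1‖⁻¹ ≤ n / 4 * ((l.val : ℝ)⁻¹ + ((-l).val : ℝ)⁻¹) := by
  have hn : (0:ℝ) < n := by exact_mod_cast NeZero.pos n
  by_cases h0 : l = 0
  · simp [h0]
  have main : ∀ x : ZMod n, x ≠ 0 → 2 * x.val ≤ n →
      ‖ZMod.stdAddChar x - 1‖⁻¹ ≤ n / 4 * (x.val : ℝ)⁻¹ := by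
    intro x hx h
    have hp : (0:ℝ) < x.val := by exact_mod_cast ZMod.val_pos.2 hx
    have := inv_anti₀ (by positivity) (chr_lower n x h)
    refine this.trans (le_of_eq ?_)
    field_simp
  have nn : ∀ x : ZMod n, 0 ≤ n / 4 * (x.val : ℝ)⁻¹ := fun x => by positivity
  rw [mul_add]
  by_cases h : 2 * l.val ≤ n
  · linarith [main l h0 h, nn (-l)]
  · have := main (-l) (neg_ne_zero.2 h0) (by
      have : NeZero l := ⟨h0⟩
      rw [ZMod.val_neg_of_ne_zero]; omega)
    rw [chr_neg] at this
    linarith [nn l]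

lemma sum_inv_le (n : ℕ) [NeZero n] :
    ∑ l : ZMod n, ‖ZMod.stdAddChar l - 1‖⁻¹ ≤ n / 2 * (1 + Real.log n) := by
  calc _ ≤ ∑ l : ZMod n, (n / 4 : ℝ) * ((l.val : ℝ)⁻¹ + ((-l).val : ℝ)⁻¹) :=
        Finset.sum_le_sum fun l _ => chr_inv n l
    _ = n / 2 * ∑ l : ZMod n, (l.val : ℝ)⁻¹ := by
        have := Equiv.sum_comp (Equiv.neg (ZMod n)) (fun l => (l.val : ℝ)⁻¹)
        simp only [Equiv.neg_apply] at this
        rw [← Finset.mul_sum, Finset.sum_add_distrib, this]; ring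
    _ ≤ _ := by
        gcongr
        rw [sum_val n (fun i => (i:ℝ)⁻¹)]
        refine le_trans ?_ (harmonic_le_one_add_log n)
        rw [harmonic]; push_cast
        calc _ ≤ ∑ i ∈ Finset.range (n+1), (i:ℝ)⁻¹ :=
              Finset.sum_le_sum_of_subset_of_nonneg (by simp) (fun _ _ _ => by positivity)
          _ = _ := by rw [Finset.sum_range_succ']; simp

lemma sum_inv_sq_le (n : ℕ) [NeZero n] :
    ∑ l : ZMod n, (‖ZMod.stdAddChar l - 1‖⁻¹) ^ 2 ≤ n ^ 2 := by
  calc _ ≤ ∑ l : ZMod n, (n ^ 2 / 8 : ℝ) * (((l.val : ℝ)⁻¹) ^ 2 + (((-l).val : ℝ)⁻¹) ^ 2) := by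
        refine Finset.sum_le_sum fun l _ => ?_
        refine (pow_le_pow_left₀ (by positivity) (chr_inv n l) 2).trans ?_
        have : 0 ≤ (n ^ 2 / 16 : ℝ) := by positivity
        nlinarith [mul_nonneg this (sq_nonneg ((l.val : ℝ)⁻¹ - ((-l).val : ℝ)⁻¹))]
    _ = n ^ 2 / 4 * ∑ l : ZMod n, ((l.val : ℝ)⁻¹) ^ 2 := by
        have := Equiv.sum_comp (Equiv.neg (ZMod n)) (fun l => ((l.val : ℝ)⁻¹) ^ 2)
        simp only [Equiv.neg_apply] at this
        rw [← Finset.mul_sum, Finset.sum_add_distrib, this]; ring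
    _ ≤ n ^ 2 / 4 * 4 := by
        gcongr
        rw [sum_val n (fun i => ((i:ℝ)⁻¹) ^ 2), Finset.range_eq_Ico,
          Finset.sum_eq_sum_Ico_succ_bot (NeZero.pos n)]
        have := sum_Ioo_inv_sq_le (α := ℝ) 0 n
        have e : Finset.Ioo 0 n = Finset.Ico 1 n := by ext; simp; omega
        rw [e] at this
        simp at this ⊢
        linarith
    _ = _ := by ring

/-- Reduces to `sum_inv_le` by `e (2 l) - 1 = (e l - 1) * (e l + 1)`, as doubling permutes `ZMod n`
for odd `n`. -/
lemma sum_inv_add_le (n : ℕ) [NeZero n] (hn : Odd n) :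
    ∑ l : ZMod n, ‖ZMod.stdAddChar l + 1‖⁻¹ ≤ n * (3 / 2 + Real.log n) := by
  have h2 : IsUnit (2 : ZMod n) := by
    have := (ZMod.isUnit_iff_coprime 2 n).2 (Nat.coprime_two_left.2 hn)
    simpa using this
  have hb : Function.Bijective (fun l : ZMod n => 2 * l) := by
    obtain ⟨u, hu⟩ := h2
    rw [← hu]; exact u.mulLeft_bijective
  have key : ∀ l : ZMod n, ‖ZMod.stdAddChar l + 1‖⁻¹ ≤ 1/2 + 2 * ‖ZMod.stdAddChar (2 * l) - 1‖⁻¹ := by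
    intro l
    by_cases h0 : l = 0
    · simp [h0]; norm_num
    have hne : (ZMod.stdAddChar (2 * l) : ℂ) - 1 ≠ 0 := by
      rw [sub_ne_zero]; intro h
      rw [← AddChar.map_zero_eq_one (ZMod.stdAddChar (N := n))] at h
      have := ZMod.injective_stdAddChar h
      exact h0 (hb.1 (by simpa using this))
    have hf : (ZMod.stdAddChar (2 * l) : ℂ) - 1 =
        (ZMod.stdAddChar l - 1) * (ZMod.stdAddChar l + 1) := by
      rw [two_mul, AddChar.map_add_eq_mul]; ring
    rw [hf] at hne ⊢
    rw [mul_ne_zero_iff] at hne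
    rw [norm_mul, mul_inv]
    have h1 : ‖(ZMod.stdAddChar l : ℂ) - 1‖ ≤ 2 := by
      refine (norm_sub_le _ _).trans ?_
      rw [AddChar.norm_apply]; norm_num
    have hp : 0 < ‖(ZMod.stdAddChar l : ℂ) - 1‖ := norm_pos_iff.2 hne.1
    have h3 : 1 ≤ 2 * ‖(ZMod.stdAddChar l : ℂ) - 1‖⁻¹ := by
      rw [← div_eq_mul_inv, le_div_iff₀ hp]; linarith
    have : 0 ≤ ‖(ZMod.stdAddChar l : ℂ) + 1‖⁻¹ := by positivity
    nlinarith
  refine (Finset.sum_le_sum fun l _ => key l).trans ?_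
  rw [Finset.sum_add_distrib, ← Finset.mul_sum,
    hb.sum_comp (fun l => ‖(ZMod.stdAddChar l : ℂ) - 1‖⁻¹)]
  have := sum_inv_le n
  simp [ZMod.card]
  linarith

/-! ### Fourier transform on `ZMod n` -/

/-- The unnormalised discrete Fourier transform `k ↦ ∑ v, e (-v k) * f v`. -/
noncomputable def hat {n : ℕ} [NeZero n] (f : ZMod n → ℂ) (k : ZMod n) : ℂ :=
  ∑ v : ZMod n, ZMod.stdAddChar (-(v * k)) * f v

/-- Pointwise products in position space are correlations in Fourier space. -/
lemma hat_corr {n : ℕ} [NeZero n] (f g : ZMod n → ℂ) (m : ZMod n) :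
    ∑ k, hat f (k + m) * star (hat g k) = n * hat (fun v => f v * star (g v)) m := by
  have h1 : ∀ k, hat f (k + m) * star (hat g k) = ∑ v, ∑ w,
      ZMod.stdAddChar (-(v * m)) * f v * star (g w) * ZMod.stdAddChar (k * (w - v)) := by
    intro k
    rw [hat, hat, star_sum, Finset.sum_mul_sum]
    refine Finset.sum_congr rfl fun v _ => Finset.sum_congr rfl fun w _ => ?_
    have e1 : star (ZMod.stdAddChar (-(w * k)) : ℂ) = ZMod.stdAddChar (w * k) := by
      rw [AddChar.map_neg_eq_conj]; exact Complex.conj_conj _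
    have e2 : -(v * (k + m)) = -(v * m) + -(v * k) := by ring
    have e3 : k * (w - v) = w * k + -(v * k) := by ring
    rw [star_mul, e1, e2, e3, AddChar.map_add_eq_mul, AddChar.map_add_eq_mul]
    ring
  simp_rw [h1]
  rw [Finset.sum_comm, hat, Finset.mul_sum]
  refine Finset.sum_congr rfl fun v _ => ?_
  rw [Finset.sum_comm]
  simp_rw [← Finset.mul_sum, AddChar.sum_mulShift _ (ZMod.isPrimitive_stdAddChar n), sub_eq_zero]
  simp [ZMod.card]
  ring

lemma hat_parseval {n : ℕ} [NeZero n] (f : ZMod n → ℂ) :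
    ∑ k, ‖hat f k‖ ^ 2 = n * ∑ v, ‖f v‖ ^ 2 := by
  have h := hat_corr f f 0
  have e : ∀ z : ℂ, z * star z = ((‖z‖ ^ 2 : ℝ) : ℂ) := fun z => by
    rw [Complex.ofReal_pow]; exact Complex.mul_conj' z
  simp only [add_zero, e, hat, mul_zero, neg_zero, AddChar.map_zero_eq_one, one_mul] at h
  exact_mod_cast h

lemma hat_shift {n : ℕ} [NeZero n] (f : ZMod n → ℂ) (s k : ZMod n) :
    hat (fun v => f (v + s)) k = ZMod.stdAddChar (s * k) * hat f k := by
  rw [hat, hat, ← Equiv.sum_comp (Equiv.addRight (-s)), Finset.mul_sum]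
  refine Finset.sum_congr rfl fun v _ => ?_
  simp only [Equiv.coe_addRight, neg_add_cancel_right]
  rw [← mul_assoc, ← AddChar.map_add_eq_mul]
  congr 2; ring

/-! ### The walk in Fourier space -/

/-- Fourier amplitude at mode `k` of the `L` component after `t` steps. -/
noncomputable def ampL {n : ℕ} [NeZero n] (ψ : ZMod n → ℂ × ℂ) (t : ℕ) (k : ZMod n) : ℂ :=
  hat (fun v => ((cycleHadamardStep n)^[t] ψ v).1) k

/-- Fourier amplitude at mode `k` of the `R` component after `t` steps. -/
noncomputable def ampR {n : ℕ} [NeZero n] (ψ : ZMod n → ℂ × ℂ) (t : ℕ) (k : ZMod n) : ℂ :=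
  hat (fun v => ((cycleHadamardStep n)^[t] ψ v).2) k

lemma ampL_succ {n : ℕ} [NeZero n] (ψ : ZMod n → ℂ × ℂ) (t : ℕ) (k : ZMod n) :
    ampL ψ (t+1) k = ZMod.stdAddChar k * (ampR ψ t k - ampL ψ t k) / (Real.sqrt 2 : ℂ) := by
  have h1 := hat_shift (fun v => ((cycleHadamardStep n)^[t] ψ v).1) 1 k
  have h2 := hat_shift (fun v => ((cycleHadamardStep n)^[t] ψ v).2) 1 k
  rw [one_mul] at h1 h2
  rw [mul_sub, ampL, ampL, ampR, ← h1, ← h2, hat, hat, hat, ← Finset.sum_sub_distrib,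
    Finset.sum_div]
  refine Finset.sum_congr rfl fun v _ => ?_
  rw [Function.iterate_succ_apply']
  simp only [cycleHadamardStep]
  ring

lemma ampR_succ {n : ℕ} [NeZero n] (ψ : ZMod n → ℂ × ℂ) (t : ℕ) (k : ZMod n) :
    ampR ψ (t+1) k = ZMod.stdAddChar (-k) * (ampR ψ t k + ampL ψ t k) / (Real.sqrt 2 : ℂ) := by
  have h1 := hat_shift (fun v => ((cycleHadamardStep n)^[t] ψ v).1) (-1) k
  have h2 := hat_shift (fun v => ((cycleHadamardStep n)^[t] ψ v).2) (-1) k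
  rw [neg_one_mul] at h1 h2
  rw [mul_add, ampL, ampR, ampR, ← h1, ← h2, hat, hat, hat, ← Finset.sum_add_distrib,
    Finset.sum_div]
  refine Finset.sum_congr rfl fun v _ => ?_
  rw [Function.iterate_succ_apply']
  simp only [cycleHadamardStep, sub_eq_add_neg]
  ring

/-- Trace of the `2 × 2` matrix by which a step acts on mode `k`; it equals `-i √2 sin (2 π k / n)`.
-/
noncomputable def trc {n : ℕ} [NeZero n] (k : ZMod n) : ℂ :=
  (ZMod.stdAddChar (-k) - ZMod.stdAddChar k) / (Real.sqrt 2 : ℂ)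

lemma sqrt2_sq : (Real.sqrt 2 : ℂ) ^ 2 = 2 := by
  rw [← Complex.ofReal_pow, Real.sq_sqrt (by norm_num)]; norm_num

lemma sqrt2_ne : (Real.sqrt 2 : ℂ) ≠ 0 := by
  intro h; have := sqrt2_sq; rw [h] at this; norm_num at this

lemma chr_mul_neg {n : ℕ} [NeZero n] (k : ZMod n) :
    (ZMod.stdAddChar k : ℂ) * ZMod.stdAddChar (-k) = 1 := by
  rw [← AddChar.map_add_eq_mul]; simp

lemma ampL_rec {n : ℕ} [NeZero n] (ψ : ZMod n → ℂ × ℂ) (t : ℕ) (k : ZMod n) :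
    ampL ψ (t+2) k = ampL ψ t k + trc k * ampL ψ (t+1) k := by
  rw [ampL_succ ψ (t+1), ampR_succ, ampL_succ, trc]
  have := chr_mul_neg k
  have := sqrt2_ne
  have := sqrt2_sq
  field_simp
  grind

lemma ampR_rec {n : ℕ} [NeZero n] (ψ : ZMod n → ℂ × ℂ) (t : ℕ) (k : ZMod n) :
    ampR ψ (t+2) k = ampR ψ t k + trc k * ampR ψ (t+1) k := by
  rw [ampR_succ ψ (t+1), ampR_succ, ampL_succ, trc]
  have := chr_mul_neg k
  have := sqrt2_ne
  have := sqrt2_sq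
  field_simp
  grind

lemma amp_norm_succ {n : ℕ} [NeZero n] (ψ : ZMod n → ℂ × ℂ) (t : ℕ) (k : ZMod n) :
    ‖ampL ψ (t+1) k‖ ^ 2 + ‖ampR ψ (t+1) k‖ ^ 2 = ‖ampL ψ t k‖ ^ 2 + ‖ampR ψ t k‖ ^ 2 := by
  rw [ampL_succ, ampR_succ]
  have h : ‖(Real.sqrt 2 : ℂ)‖ ^ 2 = 2 := by rw [← norm_pow, sqrt2_sq]; norm_num
  have hp := parallelogram_law_with_norm ℝ (ampR ψ t k) (ampL ψ t k)
  simp only [norm_div, norm_mul, AddChar.norm_apply, one_mul, div_pow, h]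
  linarith

/-- A standard basis state has Fourier amplitudes of total modulus `1` at every mode, and each step
is unitary mode by mode. -/
lemma amp_norm {n : ℕ} [NeZero n] (ψ : ZMod n → ℂ × ℂ)
    (h : (∃ v₀ : ZMod n, ψ = fun v => if v = v₀ then ((1 : ℂ), (0 : ℂ)) else (0, 0)) ∨
             (∃ v₀ : ZMod n, ψ = fun v => if v = v₀ then ((0 : ℂ), (1 : ℂ)) else (0, 0)))
    (t : ℕ) (k : ZMod n) : ‖ampL ψ t k‖ ^ 2 + ‖ampR ψ t k‖ ^ 2 = 1 := by
  induction t with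
  | zero =>
    rcases h with ⟨v₀, rfl⟩ | ⟨v₀, rfl⟩ <;>
    simp [ampL, ampR, hat, apply_ite Prod.fst, apply_ite Prod.snd]
  | succ t ih => rw [amp_norm_succ, ih]

lemma star_trc {n : ℕ} [NeZero n] (k : ZMod n) : star (trc k) = -trc k := by
  have h1 := AddChar.map_neg_eq_conj (ZMod.stdAddChar (N := n)) k
  have h2 := AddChar.map_neg_eq_conj (ZMod.stdAddChar (N := n)) (-k)
  rw [neg_neg] at h2
  have e : star (trc k) = (starRingEnd ℂ) (trc k) := rfl
  rw [e, trc, map_div₀, map_sub, ← h1, ← h2, Complex.conj_ofReal]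
  ring

/-- With `j = k + m`: `e (-j) - e j - e (-k) + e k = -e (-j) * (e m - 1) * (e (j + k) + 1)`. -/
lemma trc_gap {n : ℕ} [NeZero n] (k m : ZMod n) :
    ‖trc (k + m) - trc k‖ =
      ‖(ZMod.stdAddChar m : ℂ) - 1‖ * ‖(ZMod.stdAddChar (2 * k + m) : ℂ) + 1‖ / Real.sqrt 2 := by
  have h : trc (k + m) - trc k = - ZMod.stdAddChar (-(k+m)) * (ZMod.stdAddChar m - 1) *
      (ZMod.stdAddChar (2 * k + m) + 1) / (Real.sqrt 2 : ℂ) := by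
    have h1 := chr_mul_neg k
    have h2 := chr_mul_neg m
    rw [trc, trc, two_mul, neg_add]
    simp only [AddChar.map_add_eq_mul]
    field_simp
    grind
  rw [h, norm_div, norm_mul, norm_mul, norm_neg, AddChar.norm_apply, one_mul,
    Complex.norm_of_nonneg (Real.sqrt_nonneg 2)]

lemma inner_le {a b c d : ℂ} (h1 : ‖a‖ ^ 2 + ‖b‖ ^ 2 = 1) (h2 : ‖c‖ ^ 2 + ‖d‖ ^ 2 = 1) :
    ‖a * star c + b * star d‖ ≤ 1 := by
  refine (norm_add_le _ _).trans ?_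
  rw [norm_mul, norm_mul, norm_star, norm_star]
  nlinarith [sq_nonneg (‖a‖ - ‖c‖), sq_nonneg (‖b‖ - ‖d‖)]

/-- Stated multiplied through by the gap, which may vanish here. -/
lemma time_sum_le {n : ℕ} [NeZero n] (ψ : ZMod n → ℂ × ℂ)
    (h : ∀ t k, ‖ampL ψ t k‖ ^ 2 + ‖ampR ψ t k‖ ^ 2 = 1) (T : ℕ) (j k : ZMod n) :
    ‖trc j - trc k‖ * ‖∑ t ∈ Finset.range T,
      (ampL ψ t j * star (ampL ψ t k) + ampR ψ t j * star (ampR ψ t k))‖ ≤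
      4 + 2 * ‖trc j - trc k‖ := by
  have hL := step_tel (fun t => ampL ψ t j) (fun t => ampL ψ t k) _ _
    (fun t => ampL_rec ψ t j) (fun t => ampL_rec ψ t k) (star_trc k) T
  have hR := step_tel (fun t => ampR ψ t j) (fun t => ampR ψ t k) _ _
    (fun t => ampR_rec ψ t j) (fun t => ampR_rec ψ t k) (star_trc k) T
  let G : ℕ → ℕ → ℂ := fun s t =>
    ampL ψ s j * star (ampL ψ t k) + ampR ψ s j * star (ampR ψ t k)
  have hG : ∀ s t, ‖G s t‖ ≤ 1 := fun s t => inner_le (h s j) (h t k)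
  rw [← norm_mul, Finset.sum_add_distrib, mul_add, hL, hR]
  have e : ∀ x y : ℂ, x = y → ‖y‖ ≤ 4 + 2 * ‖trc j - trc k‖ → ‖x‖ ≤ 4 + 2 * ‖trc j - trc k‖ := by
    rintro x y rfl; exact id
  refine e _ ((G T (T+1) + G (T+1) T) - (G 0 1 + G 1 0) + (trc j - trc k) * (G 0 0 - G T T))
    (by simp only [G]; ring) ?_
  refine (norm_add_le _ _).trans ?_
  have a1 := norm_sub_le (G T (T+1) + G (T+1) T) (G 0 1 + G 1 0)
  have a2 := norm_add_le (G T (T+1)) (G (T+1) T)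
  have a3 := norm_add_le (G 0 1) (G 1 0)
  have a4 : ‖(trc j - trc k) * (G 0 0 - G T T)‖ ≤ ‖trc j - trc k‖ * 2 := by
    rw [norm_mul]
    gcongr
    exact (norm_sub_le _ _).trans (by linarith [hG 0 0, hG T T])
  linarith [hG T (T+1), hG (T+1) T, hG 0 1, hG 1 0]

/-! ### Averaged distribution -/

/-- The node distribution after `t` steps. -/
noncomputable def prob {n : ℕ} (ψ : ZMod n → ℂ × ℂ) (t : ℕ) (v : ZMod n) : ℝ :=
  ‖((cycleHadamardStep n)^[t] ψ v).1‖ ^ 2 + ‖((cycleHadamardStep n)^[t] ψ v).2‖ ^ 2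

lemma hat_prob {n : ℕ} [NeZero n] (ψ : ZMod n → ℂ × ℂ) (t : ℕ) (m : ZMod n) :
    n * hat (fun v => (prob ψ t v : ℂ)) m =
      ∑ k, (ampL ψ t (k + m) * star (ampL ψ t k) + ampR ψ t (k + m) * star (ampR ψ t k)) := by
  rw [Finset.sum_add_distrib]
  simp only [ampL, ampR]
  rw [hat_corr, hat_corr, ← mul_add, hat, hat, hat, ← Finset.sum_add_distrib]
  congr 1
  refine Finset.sum_congr rfl fun v _ => ?_
  have e : ∀ z : ℂ, z * star z = ((‖z‖ ^ 2 : ℝ) : ℂ) := fun z => by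
    rw [Complex.ofReal_pow]; exact Complex.mul_conj' z
  rw [e, e, prob]; push_cast; ring

lemma sum_prob {n : ℕ} [NeZero n] (ψ : ZMod n → ℂ × ℂ)
    (h : ∀ t k, ‖ampL ψ t k‖ ^ 2 + ‖ampR ψ t k‖ ^ 2 = 1) (t : ℕ) :
    ∑ v, prob ψ t v = 1 := by
  have hn : (n:ℝ) ≠ 0 := by exact_mod_cast NeZero.ne n
  have h1 := hat_parseval (fun v => ((cycleHadamardStep n)^[t] ψ v).1)
  have h2 := hat_parseval (fun v => ((cycleHadamardStep n)^[t] ψ v).2)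
  have h3 : ∑ k : ZMod n, (‖ampL ψ t k‖ ^ 2 + ‖ampR ψ t k‖ ^ 2) = n := by
    simp [h, ZMod.card]
  rw [Finset.sum_add_distrib] at h3
  simp only [ampL, ampR, h1, h2] at h3
  simp only [prob, Finset.sum_add_distrib]
  rw [← mul_add] at h3
  exact mul_left_cancel₀ hn (h3.trans (mul_one _).symm)

/-- The gap is at most `2 * 2 / √2`, so `time_sum_le` gives
`(4 √2 + 8) / (|e m - 1| * |e (2 k + m) + 1|)`,
and `4 √2 + 8 ≤ 15`. -/
lemma time_sum_le' {n : ℕ} [NeZero n] (hodd : Odd n) (ψ : ZMod n → ℂ × ℂ)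
    (h : ∀ t k, ‖ampL ψ t k‖ ^ 2 + ‖ampR ψ t k‖ ^ 2 = 1) (T : ℕ) (k m : ZMod n) (hm : m ≠ 0) :
    ‖∑ t ∈ Finset.range T,
      (ampL ψ t (k + m) * star (ampL ψ t k) + ampR ψ t (k + m) * star (ampR ψ t k))‖ ≤
      15 * ‖(ZMod.stdAddChar m : ℂ) - 1‖⁻¹ * ‖(ZMod.stdAddChar (2 * k + m) : ℂ) + 1‖⁻¹ := by
  have hs := time_sum_le ψ h T (k + m) k
  rw [trc_gap] at hs
  have hA : 0 < ‖(ZMod.stdAddChar m : ℂ) - 1‖ := by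
    rw [norm_pos_iff, sub_ne_zero]; intro h
    rw [← AddChar.map_zero_eq_one (ZMod.stdAddChar (N := n))] at h
    exact hm (ZMod.injective_stdAddChar h)
  have hB : 0 < ‖(ZMod.stdAddChar (2 * k + m) : ℂ) + 1‖ := by
    rw [norm_pos_iff]; intro h
    have h1 : (ZMod.stdAddChar (2 * k + m) : ℂ) = -1 := eq_neg_of_add_eq_zero_left h
    -- an odd power of `-1` cannot be the `n`-th power `1` of an `n`-th root of unity
    have h2 := AddChar.map_nsmul_eq_pow (ZMod.stdAddChar (N := n)) n (2 * k + m)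
    rw [h1, hodd.neg_one_pow] at h2
    simp at h2
    norm_num at h2
  have hA2 : ‖(ZMod.stdAddChar m : ℂ) - 1‖ ≤ 2 := by
    refine (norm_sub_le _ _).trans ?_
    rw [AddChar.norm_apply]; norm_num
  have hB2 : ‖(ZMod.stdAddChar (2 * k + m) : ℂ) + 1‖ ≤ 2 := by
    refine (norm_add_le _ _).trans ?_
    rw [AddChar.norm_apply]; norm_num
  have hAB := mul_le_mul hA2 hB2 hB.le (by norm_num)
  rw [mul_assoc, ← mul_inv, ← div_eq_mul_inv, le_div_iff₀ (mul_pos hA hB)]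
  set X := ‖(ZMod.stdAddChar m : ℂ) - 1‖ * ‖(ZMod.stdAddChar (2 * k + m) : ℂ) + 1‖
  have hsp : 0 < Real.sqrt 2 := by positivity
  have hs2 : Real.sqrt 2 ≤ 3 / 2 := by
    rw [Real.sqrt_le_left (by norm_num)]; norm_num
  have := mul_le_mul_of_nonneg_right hs hsp.le
  have e1 : X / √2 * √2 = X := by field_simp
  rw [mul_right_comm, e1, add_mul, mul_assoc 2, e1] at this
  linarith

/-- Away from `m = 0`, the Fourier coefficients of the time-summed distribution are bounded
independently of `T`. -/
lemma hat_avg_le {n : ℕ} [NeZero n] (hodd : Odd n) (ψ : ZMod n → ℂ × ℂ)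
    (h : ∀ t k, ‖ampL ψ t k‖ ^ 2 + ‖ampR ψ t k‖ ^ 2 = 1) (T : ℕ) (m : ZMod n) (hm : m ≠ 0) :
    ‖∑ t ∈ Finset.range T, hat (fun v => (prob ψ t v : ℂ)) m‖ ≤
      15 * (3 / 2 + Real.log n) * ‖(ZMod.stdAddChar m : ℂ) - 1‖⁻¹ := by
  have hn : (0:ℝ) < n := by exact_mod_cast NeZero.pos n
  have h2 : IsUnit (2 : ZMod n) := by
    have := (ZMod.isUnit_iff_coprime 2 n).2 (Nat.coprime_two_left.2 hodd)
    simpa using this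
  have hb : Function.Bijective (fun k : ZMod n => 2 * k + m) := by
    obtain ⟨u, hu⟩ := h2
    rw [← hu]
    exact (Equiv.addRight m).bijective.comp u.mulLeft_bijective
  have key : n * ‖∑ t ∈ Finset.range T, hat (fun v => (prob ψ t v : ℂ)) m‖ ≤
      n * (15 * (3 / 2 + Real.log n) * ‖(ZMod.stdAddChar m : ℂ) - 1‖⁻¹) := by
    have e : (n:ℝ) = ‖(n:ℂ)‖ := by simp
    conv_lhs => rw [e]
    rw [← norm_mul, Finset.mul_sum]
    simp_rw [hat_prob]
    rw [Finset.sum_comm]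
    refine (norm_sum_le _ _).trans ((Finset.sum_le_sum fun k _ =>
      time_sum_le' hodd ψ h T k m hm).trans ?_)
    rw [← Finset.mul_sum, hb.sum_comp (fun l => ‖(ZMod.stdAddChar l : ℂ) + 1‖⁻¹)]
    refine (mul_le_mul_of_nonneg_left (sum_inv_add_le n hodd) (by positivity)).trans (le_of_eq ?_)
    ring
  exact le_of_mul_le_mul_left key hn

lemma tv_bound {n : ℕ} [NeZero n] (hodd : Odd n) (ψ : ZMod n → ℂ × ℂ)
    (h : ∀ t k, ‖ampL ψ t k‖ ^ 2 + ‖ampR ψ t k‖ ^ 2 = 1) (T : ℕ) (hT : 0 < T) :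
    ∑ v, |(T:ℝ)⁻¹ * ∑ t ∈ Finset.range T, prob ψ t v - 1 / (n:ℝ)| ≤
      15 * (3 / 2 + Real.log n) * n / T := by
  have hn : (0:ℝ) < n := by exact_mod_cast NeZero.pos n
  have hT' : (0:ℝ) < T := by exact_mod_cast hT
  set D : ZMod n → ℝ := fun v => (T:ℝ)⁻¹ * ∑ t ∈ Finset.range T, prob ψ t v - 1 / (n:ℝ) with hD
  set K : ℝ := 15 * (3 / 2 + Real.log n) / T with hK
  have hlog : 0 ≤ Real.log n := Real.log_natCast_nonneg n
  have hK0 : 0 ≤ K := by positivity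
  have hhat : ∀ m, ‖hat (fun v => (D v : ℂ)) m‖ ≤ K * ‖(ZMod.stdAddChar m : ℂ) - 1‖⁻¹ := by
    intro m
    by_cases hm : m = 0
    · have : ∑ v, D v = 0 := by
        simp only [hD, Finset.sum_sub_distrib, ← Finset.mul_sum]
        rw [Finset.sum_comm]
        simp only [sum_prob ψ h]
        simp [ZMod.card]
        field_simp; simp
      have h0 : hat (fun v => (D v : ℂ)) m = 0 := by
        simp only [hat, hm, mul_zero, neg_zero, AddChar.map_zero_eq_one, one_mul]
        exact_mod_cast this
      rw [h0, norm_zero]; positivity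
    · have e : hat (fun v => (D v : ℂ)) m =
          (T:ℂ)⁻¹ * ∑ t ∈ Finset.range T, hat (fun v => (prob ψ t v : ℂ)) m := by
        have hz : ∑ v : ZMod n, (ZMod.stdAddChar (-(v * m)) : ℂ) = 0 := by
          have := AddChar.sum_mulShift (-m) (ZMod.isPrimitive_stdAddChar n)
          simpa [hm] using this
        simp only [hat]
        rw [Finset.sum_comm, Finset.mul_sum]
        calc _ = ∑ v : ZMod n, ((T:ℂ)⁻¹ * ∑ t ∈ Finset.range T,
                ZMod.stdAddChar (-(v * m)) * (prob ψ t v : ℂ))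
                - (∑ v : ZMod n, (ZMod.stdAddChar (-(v * m)) : ℂ)) * (1 / n) := by
              rw [Finset.sum_mul, ← Finset.sum_sub_distrib]
              refine Finset.sum_congr rfl fun v _ => ?_
              rw [← Finset.mul_sum]
              simp only [hD]; push_cast; ring
          _ = _ := by rw [hz]; simp
      rw [e, norm_mul, norm_inv, Complex.norm_natCast]
      refine (mul_le_mul_of_nonneg_left (hat_avg_le hodd ψ h T m hm) (by positivity)).trans
        (le_of_eq ?_)
      rw [hK]; ring
  have hpar := hat_parseval (fun v => (D v : ℂ))
  simp only [Complex.norm_real, Real.norm_eq_abs] at hpar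
  have hsq : n * ∑ v, |D v| ^ 2 ≤ (K * n) ^ 2 := by
    rw [← hpar]
    calc _ ≤ ∑ m : ZMod n, K ^ 2 * (‖(ZMod.stdAddChar m : ℂ) - 1‖⁻¹) ^ 2 :=
          Finset.sum_le_sum fun m _ => by
            rw [← mul_pow]; exact pow_le_pow_left₀ (norm_nonneg _) (hhat m) 2
      _ ≤ _ := by
          rw [← Finset.mul_sum, mul_pow]
          exact mul_le_mul_of_nonneg_left (sum_inv_sq_le n) (by positivity)
  have hcs := sq_sum_le_card_mul_sum_sq (s := Finset.univ) (f := fun v : ZMod n => |D v|)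
  rw [Finset.card_univ, ZMod.card] at hcs
  have := abs_le_of_sq_le_sq (hcs.trans hsq) (by positivity)
  refine ((le_abs_self _).trans this).trans (le_of_eq ?_)
  rw [hK]; ring

theorem cycle_hadamard_mixing_time :
    ∃ c : ℝ, 0 < c ∧
      ∀ (n : ℕ) [NeZero n], Odd n → 3 ≤ n →
        ∀ ε : ℝ, 0 < ε → ε < 1 →
          ∀ ψ₀ : ZMod n → ℂ × ℂ,
            ((∃ v₀ : ZMod n, ψ₀ = fun v => if v = v₀ then ((1 : ℂ), (0 : ℂ)) else (0, 0)) ∨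
             (∃ v₀ : ZMod n, ψ₀ = fun v => if v = v₀ then ((0 : ℂ), (1 : ℂ)) else (0, 0))) →
            ∀ T : ℕ, c * n * Real.log n / ε ^ 3 ≤ (T : ℝ) →
              (1 / 2) * ∑ v : ZMod n,
                  |(T : ℝ)⁻¹ * (∑ t ∈ Finset.range T,
                      (‖((cycleHadamardStep n)^[t] ψ₀ v).1‖ ^ 2 +
                        ‖((cycleHadamardStep n)^[t] ψ₀ v).2‖ ^ 2)) - 1 / (n : ℝ)| ≤ ε := by
  refine ⟨45, by norm_num, ?_⟩
  intro n _ hodd hn3 ε hε hε1 ψ₀ hψ T hT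
  have hn : (3:ℝ) ≤ n := by exact_mod_cast hn3
  have hlog : 1 ≤ Real.log n := by
    rw [Real.le_log_iff_exp_le (by linarith)]
    linarith [Real.exp_one_lt_d9]
  have hT0 : (0:ℝ) < T := lt_of_lt_of_le (by positivity) hT
  have hb := tv_bound hodd ψ₀ (amp_norm ψ₀ hψ) T (by exact_mod_cast hT0)
  simp only [prob] at hb
  have hT1 : 45 * n * Real.log n ≤ T * ε := by
    rw [div_le_iff₀ (by positivity)] at hT
    have : ε ^ 3 ≤ ε := by nlinarith [mul_pos hε hε]
    exact hT.trans (mul_le_mul_of_nonneg_left this hT0.le)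
  -- `log n ≥ 1` absorbs the `3 / 2`: `15 * (3 / 2 + log n) ≤ 75 / 2 * log n ≤ 2 * 45 * log n`
  have hb2 : 15 * (3 / 2 + Real.log n) * n / T ≤ 2 * ε := by
    rw [div_le_iff₀ hT0]
    nlinarith
  linarith
end
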